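/- Let Ω ⊆ ℂ^{m1×m2} be a nonempty bounded set (with respect to the Frobenius norm) and let n be a positive integer with 2n > lower Minkowski dimension of Ω. Then for Lebesgue-almost all tuples of vectors a_1, …, a_n ∈ ℂ^{m1} and b_1, …, b_n ∈ ℂ^{m2}, there does not exist a matrix M ∈ Ω with M ≠ 0 such that a_j* M (conj b_j) = 0 for all j = 1, …, n. -/

import Mathlib

/-!
The proof is a union bound over an efficient cover, combined with a small-ball estimate for the
bilinear form `a* M (conj b)`.

Fix `0 < α < 2`. The function `|z| ^ (-α)` is locally integrable on `ℂ`, so the integral of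
`|conj z * v + u| ^ (-α)` over a disc is at most `K |v| ^ (-α)`, uniformly in `u` (`lint_disc`).
Applying this first in the coordinate `a_i` and then in `b_j` bounds the integral of
`|a* M (conj b)| ^ (-α)` over a polydisc by a constant times `|M_ij| ^ (-α)`. Tensorizing
over the `n` independent pairs (`lint_meas`) and using Markov's inequality, the set of tuples with all
`n` measurements at most `ε` has measure `O(ε ^ (α n))`, uniformly over matrices with
`|M_ij| ≥ η` (`small_ball`). Working with an exponent `α < 2` avoids the logarithm which
the optimal bound has for matrices of rank one.

Choose `s` and `α` with `lowerMinkowskiDim Ω < s < α n < 2 n`. For arbitrarily small `ρ` the set is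
covered by at most `ρ ^ (-s)` balls of radius `ρ` (`frequently_card_le`). If all measurements of
some `M` in a ball vanish, those of its center are `O(ρ)`, so the tuples for which some
`M ∈ Ω` with a large entry is annihilated have measure `O(ρ ^ (α n - s))`, hence zero (`null_piece`).
A countable union over the size of the polydisc, the entry and its lower bound finishes the proof.

Since `lowerMinkowskiDim` is a `liminf` of real numbers, extracting the radii `ρ` requires an a priori
polynomial bound on covering numbers, which comes from iterated doubling (`exists_cover_pow`).
-/

open MeasureTheory Filter

/-- Covering number: the minimal number of closed balls of radius `ρ`
(with arbitrary centers) needed to cover `Ω`. -/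
noncomputable def coveringNumber {X : Type*} [PseudoMetricSpace X] (Ω : Set X) (ρ : ℝ) : ℕ :=
  sInf {k : ℕ | ∃ C : Finset X, C.card = k ∧ Ω ⊆ ⋃ c ∈ C, Metric.closedBall c ρ}

/-- Lower Minkowski dimension: `liminf_{ρ → 0⁺} log N_Ω(ρ) / log (1/ρ)`. -/
noncomputable def lowerMinkowskiDim {X : Type*} [PseudoMetricSpace X] (Ω : Set X) : ℝ :=
  Filter.liminf (fun ρ : ℝ => Real.log (coveringNumber Ω ρ) / Real.log (1 / ρ))
    (nhdsWithin 0 (Set.Ioi 0))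

/-- The rank-one measurement `a* M (conj b) = ∑_{i,j} conj(a_i) M_{ij} conj(b_j)`. -/
noncomputable def rankOneMeas {m1 m2 : ℕ} (a : Fin m1 → ℂ) (b : Fin m2 → ℂ)
    (M : EuclideanSpace ℂ (Fin m1 × Fin m2)) : ℂ :=
  ∑ i : Fin m1, ∑ j : Fin m2, (starRingEnd ℂ) (a i) * M (i, j) * (starRingEnd ℂ) (b j)

open scoped ENNReal

/-! ### Covering numbers -/

/-- Iterated doubling: if `k` balls of radius `1/2` cover the unit ball, then `k ^ t` balls of
radius `R / 2 ^ t` cover the ball of radius `R`. -/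
lemma exists_cover_pow {E : Type*} [NormedAddCommGroup E] [NormedSpace ℝ E] [ProperSpace E] :
    ∃ k : ℕ, 1 ≤ k ∧ ∀ (R : ℝ), 0 < R → ∀ t : ℕ, ∃ C : Finset E, C.card ≤ k ^ t ∧
      Metric.closedBall (0 : E) R ⊆ ⋃ c ∈ C, Metric.closedBall c (R / 2 ^ t) := by
  classical
  obtain ⟨T, hTf, hT⟩ := Metric.totallyBounded_iff.1
    (isCompact_closedBall (0 : E) 1).totallyBounded (1 / 2) (by norm_num)
  refine ⟨hTf.toFinset.card + 1, by omega, fun R hR t => ?_⟩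
  induction t with
  | zero => exact ⟨{0}, by simp, by simp⟩
  | succ t ih =>
    obtain ⟨C, hC, hcov⟩ := ih
    refine ⟨Finset.image₂ (fun c d => c + (R / 2 ^ t) • d) C hTf.toFinset, ?_, fun x hx => ?_⟩
    · calc _ ≤ C.card * hTf.toFinset.card := Finset.card_image₂_le _ _ _
        _ ≤ _ := by rw [pow_succ]; gcongr; omega
    · obtain ⟨c, hc, hxc⟩ := Set.mem_iUnion₂.1 (hcov hx)
      set r : ℝ := R / 2 ^ t with hr
      have hr0 : 0 < r := by positivity
      have hy : r⁻¹ • (x - c) ∈ Metric.closedBall (0 : E) 1 := by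
        rw [mem_closedBall_zero_iff, norm_smul, norm_inv, Real.norm_of_nonneg hr0.le,
          inv_mul_le_iff₀ hr0, mul_one, ← dist_eq_norm]
        exact hxc
      obtain ⟨d, hd, hyd⟩ := Set.mem_iUnion₂.1 (hT hy)
      refine Set.mem_iUnion₂.2 ⟨c + r • d, ?_, ?_⟩
      · exact Finset.mem_image₂_of_mem hc (hTf.mem_toFinset.2 hd)
      · rw [Metric.mem_closedBall, dist_eq_norm]
        have : x - (c + r • d) = r • (r⁻¹ • (x - c) - d) := by
          rw [smul_sub, smul_inv_smul₀ hr0.ne']; abel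
        rw [this, norm_smul, Real.norm_of_nonneg hr0.le, pow_succ, ← div_div, ← hr]
        rw [Metric.mem_ball, dist_eq_norm] at hyd
        nlinarith

/-- The quotient defining the Minkowski dimension is frequently bounded above, along the radii
`R / 2 ^ t`. Without this the real-valued `liminf` could be a junk value. -/
lemma frequently_le_coveringNumber {E : Type*} [NormedAddCommGroup E] [NormedSpace ℝ E]
    [ProperSpace E] (Ω : Set E) (hbd : Bornology.IsBounded Ω) :
    ∃ A : ℝ, ∃ᶠ ρ in nhdsWithin (0 : ℝ) (Set.Ioi 0),
      Real.log (coveringNumber Ω ρ) / Real.log (1 / ρ) ≤ A := by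
  obtain ⟨k, hk, hcov⟩ := exists_cover_pow (E := E)
  obtain ⟨R, hR0, hR⟩ := hbd.subset_closedBall_lt 0 0
  have hk' : 0 ≤ Real.log k := Real.log_nonneg (by exact_mod_cast hk)
  have hl2 : 0 < Real.log 2 := Real.log_pos (by norm_num)
  have hN : ∀ t : ℕ, Real.log (coveringNumber Ω (R / 2 ^ t)) ≤ t * Real.log k := by
    intro t
    obtain ⟨C, hC, hC'⟩ := hcov R hR0 t
    have h1 : coveringNumber Ω (R / 2 ^ t) ≤ k ^ t :=
      (Nat.sInf_le (s := {k : ℕ | ∃ C : Finset E, C.card = k ∧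
        Ω ⊆ ⋃ c ∈ C, Metric.closedBall c (R / 2 ^ t)}) ⟨C, rfl, hR.trans hC'⟩).trans hC
    rcases Nat.eq_zero_or_pos (coveringNumber Ω (R / 2 ^ t)) with h0 | h0
    · rw [h0]; simp; positivity
    · rw [← Real.log_pow]
      exact Real.log_le_log (by exact_mod_cast h0) (by exact_mod_cast h1)
  refine ⟨2 * Real.log k / Real.log 2, ?_⟩
  have ht : Tendsto (fun t : ℕ => R / 2 ^ t) atTop (nhdsWithin (0 : ℝ) (Set.Ioi 0)) := by
    rw [tendsto_nhdsWithin_iff]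
    refine ⟨?_, Eventually.of_forall fun t => by
      rw [Set.mem_Ioi]; positivity⟩
    exact tendsto_const_nhds.div_atTop (tendsto_pow_atTop_atTop_of_one_lt (by norm_num))
  refine ht.frequently (Eventually.frequently ?_)
  have hbig : Tendsto (fun t : ℕ => (t : ℝ) * (Real.log 2 / 2)) atTop atTop :=
    tendsto_natCast_atTop_atTop.atTop_mul_const (by positivity)
  filter_upwards [hbig.eventually_ge_atTop (Real.log R), eventually_gt_atTop 0] with t h1 h2
  have h2' : (0 : ℝ) < t := by exact_mod_cast h2
  have hlog : Real.log (1 / (R / 2 ^ t)) = t * Real.log 2 - Real.log R := by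
    rw [one_div_div, Real.log_div (by positivity) hR0.ne', Real.log_pow]
  rw [hlog]
  have hpos : t * (Real.log 2 / 2) ≤ t * Real.log 2 - Real.log R := by linarith
  have hpos' : 0 < t * (Real.log 2 / 2) := by positivity
  rw [div_le_div_iff₀ (by linarith) hl2]
  have := mul_le_mul_of_nonneg_right (hN t) hl2.le
  nlinarith [mul_le_mul_of_nonneg_left hpos hk']

/-- For a bounded set the infimum defining the covering number is attained, since the set of
admissible cardinalities is nonempty by total boundedness. -/
lemma exists_cover_coveringNumber {X : Type*} [PseudoMetricSpace X] [ProperSpace X] {Ω : Set X}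
    (hbd : Bornology.IsBounded Ω) {ρ : ℝ} (hρ : 0 < ρ) :
    ∃ C : Finset X, C.card = coveringNumber Ω ρ ∧ Ω ⊆ ⋃ c ∈ C, Metric.closedBall c ρ := by
  refine Nat.sInf_mem (s := {k : ℕ | ∃ C : Finset X, C.card = k ∧
    Ω ⊆ ⋃ c ∈ C, Metric.closedBall c ρ}) ?_
  obtain ⟨T, hTf, hT⟩ := Metric.totallyBounded_iff.1 (hbd.isCompact_closure.totallyBounded.subset
    subset_closure) ρ hρ
  refine ⟨_, hTf.toFinset, rfl, hT.trans ?_⟩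
  simp only [Set.Finite.mem_toFinset]
  exact Set.iUnion₂_mono fun c _ => Metric.ball_subset_closedBall

/-- If `s` exceeds the lower Minkowski dimension, then along arbitrarily small radii `ρ` the set is
covered by at most `ρ ^ (-s)` balls of radius `ρ`. -/
lemma frequently_card_le {E : Type*} [NormedAddCommGroup E] [NormedSpace ℝ E]
    [ProperSpace E] {Ω : Set E} (hbd : Bornology.IsBounded Ω) {s : ℝ}
    (hs : lowerMinkowskiDim Ω < s) :
    ∃ᶠ ρ in nhdsWithin (0 : ℝ) (Set.Ioi 0), ∃ C : Finset E, (C.card : ℝ) ≤ ρ ^ (-s) ∧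
      Ω ⊆ ⋃ c ∈ C, Metric.closedBall c ρ := by
  obtain ⟨A, hA⟩ := frequently_le_coveringNumber Ω hbd
  have hfreq := frequently_lt_of_liminf_lt (IsCoboundedUnder.of_frequently_le hA) hs
  refine (hfreq.and_eventually (Ioo_mem_nhdsGT one_pos)).mono ?_
  rintro ρ ⟨hlt, h0, h1⟩
  obtain ⟨C, hC, hcov⟩ := exists_cover_coveringNumber hbd h0
  refine ⟨C, ?_, hcov⟩
  rw [hC]
  rcases Nat.eq_zero_or_pos (coveringNumber Ω ρ) with hN | hN
  · rw [hN]; simp; positivity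
  · have hl : 0 < Real.log (1 / ρ) := Real.log_pos (by rw [lt_div_iff₀ h0]; linarith)
    rw [div_lt_iff₀ hl, one_div, Real.log_inv] at hlt
    rw [← Real.log_le_log_iff (by exact_mod_cast hN) (by positivity), Real.log_rpow h0]
    linarith

/-! ### Negative moments of the measurement -/

/-- The negative moment of an affine function over a disc of `ℂ` is bounded by a constant times
`|v| ^ (-α)`, uniformly in the constant term `u`: after factoring out `v`, only the singularity
`|z| ^ (-α)` matters, which is integrable in real dimension two because `α < 2`. For `v = 0` the
right-hand side is `∞`. -/
lemma lint_disc (α R : ℝ) (h0 : 0 < α) (h2 : α < 2) :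
    ∃ K : ℝ≥0∞, K ≠ ∞ ∧ ∀ v u : ℂ,
      ∫⁻ z in Metric.closedBall (0 : ℂ) R, ‖(starRingEnd ℂ) z * v + u‖ₑ ^ (-α)
        ≤ K * ‖v‖ₑ ^ (-α) := by
  have hfin : ∫⁻ z in Metric.ball (0 : ℂ) 1, ‖z‖ₑ ^ (-α) ≠ ∞ := by
    have h : IntegrableOn (fun z : ℂ => ‖z‖ ^ (-α)) (Metric.ball (0 : ℂ) 1) := by
      refine integrableOn_ball_of_norm_le_rpow (C := 1) (α := α) ?_ ?_ ?_ ?_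
      · simp
      · simpa using h2
      · refine ae_of_all _ fun z => ?_
        rw [Real.norm_of_nonneg (by positivity), one_mul]
      · exact (by fun_prop : Measurable fun z : ℂ => ‖z‖ ^ (-α)).aestronglyMeasurable
    have h' := h.2.ne
    refine ne_of_eq_of_ne (lintegral_congr_ae (ae_restrict_of_ae ?_)) h'
    filter_upwards [(measure_eq_zero_iff_ae_notMem.1 (measure_singleton (0 : ℂ)) : _)] with z hz
    have hz' : 0 < ‖z‖ := norm_pos_iff.2 hz
    rw [Real.enorm_eq_ofReal (by positivity), ← ENNReal.ofReal_rpow_of_pos hz', ofReal_norm]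
  -- The summand `1` makes the constant nonzero, so that the bound is `∞` when `v = 0`.
  refine ⟨(∫⁻ z in Metric.ball (0 : ℂ) 1, ‖z‖ₑ ^ (-α)) +
    volume (Metric.closedBall (0 : ℂ) R) + 1, ?_, fun v u => ?_⟩
  · have : volume (Metric.closedBall (0 : ℂ) R) ≠ ∞ := measure_closedBall_lt_top.ne
    finiteness
  by_cases hv : v = 0
  · simp [hv, h0, ENNReal.mul_top]
  set w : ℂ := (starRingEnd ℂ) (u / v)
  have key : ∀ z : ℂ, ‖(starRingEnd ℂ) z * v + u‖ₑ ^ (-α) = ‖z + w‖ₑ ^ (-α) * ‖v‖ₑ ^ (-α) := by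
    intro z
    have : (starRingEnd ℂ) z * v + u = (starRingEnd ℂ) (z + w) * v := by
      simp only [w, map_add, Complex.conj_conj]
      field_simp
    rw [this, enorm_mul, ENNReal.mul_rpow_of_ne_top (by simp) (by simp),
      ← ofReal_norm ((starRingEnd ℂ) (z + w)), Complex.norm_conj, ofReal_norm]
  simp_rw [key]
  rw [lintegral_mul_const _ (by fun_prop)]
  gcongr
  set g : ℂ → ℝ≥0∞ := (Metric.ball (0 : ℂ) 1).indicator fun z => ‖z‖ₑ ^ (-α)
  calc ∫⁻ z in Metric.closedBall (0 : ℂ) R, ‖z + w‖ₑ ^ (-α)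
      ≤ ∫⁻ z in Metric.closedBall (0 : ℂ) R, (g (z + w) + 1) := by
        refine lintegral_mono fun z => ?_
        by_cases hz : z + w ∈ Metric.ball (0 : ℂ) 1
        · simp only [g, Set.indicator_of_mem hz]
          exact le_self_add
        · simp only [g, Set.indicator_of_notMem hz, zero_add]
          have : 1 ≤ ‖z + w‖ₑ := by
            rw [← ofReal_norm, ENNReal.one_le_ofReal]
            simpa using hz
          exact ENNReal.rpow_le_one_of_one_le_of_neg this (by linarith)
    _ = (∫⁻ z in Metric.closedBall (0 : ℂ) R, g (z + w)) + volume (Metric.closedBall (0 : ℂ) R) := by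
        rw [lintegral_add_right _ measurable_const]; simp
    _ ≤ (∫⁻ z, g (z + w)) + volume (Metric.closedBall (0 : ℂ) R) := by
        gcongr; exact Measure.restrict_le_self
    _ = (∫⁻ z in Metric.ball (0 : ℂ) 1, ‖z‖ₑ ^ (-α)) + volume (Metric.closedBall (0 : ℂ) R) := by
        rw [lintegral_add_right_eq_self g w, lintegral_indicator Metric.isOpen_ball.measurableSet]
    _ ≤ _ := le_self_add

lemma measurable_meas {m : ℕ} (v : Fin m → ℂ) (α : ℝ) :
    Measurable fun a : Fin m → ℂ => ‖∑ k, (starRingEnd ℂ) (a k) * v k‖ₑ ^ (-α) := by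
  have : Continuous fun a : Fin m → ℂ => ∑ k, (starRingEnd ℂ) (a k) * v k :=
    continuous_finsetSum _ fun k _ =>
      (Complex.continuous_conj.comp (continuous_apply k)).mul continuous_const
  exact this.measurable.enorm.pow_const _

/-- The one-variable bound passes to a linear form in several variables: integrate first in the
coordinate `i`, treating the other terms as the constant `u`. -/
lemma lint_vec (α : ℝ) (μ : Measure ℂ) [IsFiniteMeasure μ] (K : ℝ≥0∞) (hK : K ≠ ∞)
    (h : ∀ v u : ℂ, ∫⁻ z, ‖(starRingEnd ℂ) z * v + u‖ₑ ^ (-α) ∂μ ≤ K * ‖v‖ₑ ^ (-α)) (m : ℕ) :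
    ∃ K' : ℝ≥0∞, K' ≠ ∞ ∧ ∀ (v : Fin m → ℂ) (i : Fin m),
      ∫⁻ a, ‖∑ k, (starRingEnd ℂ) (a k) * v k‖ₑ ^ (-α) ∂(Measure.pi fun _ : Fin m => μ)
        ≤ K' * ‖v i‖ₑ ^ (-α) := by
  rcases m with _ | m
  · exact ⟨0, by simp, fun v i => i.elim0⟩
  refine ⟨K * (Measure.pi fun _ : Fin m => μ) Set.univ, by finiteness, fun v i => ?_⟩
  have hmp := measurePreserving_piFinSuccAbove (fun _ : Fin (m + 1) => μ) i
  have hm := measurable_meas v α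
  rw [← hmp.symm.lintegral_comp hm,
    lintegral_prod_symm _ (by exact (hm.comp hmp.symm.measurable).aemeasurable)]
  calc _ ≤ ∫⁻ y : Fin m → ℂ, K * ‖v i‖ₑ ^ (-α) ∂(Measure.pi fun _ : Fin m => μ) := by
        refine lintegral_mono fun y => ?_
        simp only [MeasurableEquiv.piFinSuccAbove_symm_apply, Fin.insertNthEquiv_apply]
        refine le_trans (le_of_eq ?_) (h (v i) (∑ k, (starRingEnd ℂ) (y k) * v (i.succAbove k)))
        refine lintegral_congr fun z => ?_
        rw [Fin.sum_univ_succAbove _ i]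
        simp
    _ = _ := by rw [lintegral_const]; ring

/-- Tonelli for products of functions of separate variables. -/
lemma lint_prod {X : Type*} [MeasurableSpace X] (μ : Measure X) [IsFiniteMeasure μ] (n : ℕ) :
    ∀ g : Fin n → X → ℝ≥0∞, (∀ i, Measurable (g i)) →
    ∫⁻ x, ∏ i, g i (x i) ∂(Measure.pi fun _ : Fin n => μ) = ∏ i, ∫⁻ x, g i x ∂μ := by
  induction n with
  | zero => intro g _; simp
  | succ n ih =>
    intro g hg
    have hmp := measurePreserving_piFinSuccAbove (fun _ : Fin (n + 1) => μ) 0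
    rw [← hmp.symm.lintegral_comp (by fun_prop)]
    simp only [Fin.prod_univ_succAbove _ 0, MeasurableEquiv.piFinSuccAbove_symm_apply,
      Fin.insertNthEquiv_apply, Fin.insertNth_apply_same, Fin.insertNth_apply_succAbove]
    rw [lintegral_prod_mul (f := g 0) (g := fun y : Fin n → X => ∏ i, g (Fin.succAbove 0 i) (y i))
      (hg 0).aemeasurable (Finset.measurable_prod _ fun i _ =>
        (hg _).comp (measurable_pi_apply i)).aemeasurable, ih _ fun i => hg _]

/-- Tensorization of an iterated-integral bound over `n` independent pairs `(x_l, y_l)`. -/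
lemma lint_prod_prod_le {X Y : Type*} [MeasurableSpace X] [MeasurableSpace Y] (μ : Measure X)
    (ν : Measure Y) [IsFiniteMeasure μ] [IsFiniteMeasure ν] (n : ℕ) (F : X × Y → ℝ≥0∞)
    (hF : Measurable F) (g : Y → ℝ≥0∞) (hg : Measurable g)
    (hFg : ∀ y, ∫⁻ x, F (x, y) ∂μ ≤ g y) :
    ∫⁻ ab : (Fin n → X) × (Fin n → Y), ∏ l, F (ab.1 l, ab.2 l)
      ∂((Measure.pi fun _ : Fin n => μ).prod (Measure.pi fun _ : Fin n => ν))
      ≤ (∫⁻ y, g y ∂ν) ^ n := by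
  have hm : Measurable fun ab : (Fin n → X) × (Fin n → Y) => ∏ l, F (ab.1 l, ab.2 l) :=
    Finset.measurable_prod _ fun l _ => hF.comp (by fun_prop)
  rw [lintegral_prod_symm _ hm.aemeasurable]
  calc _ ≤ ∫⁻ b : Fin n → Y, ∏ l, g (b l) ∂(Measure.pi fun _ : Fin n => ν) := by
        refine lintegral_mono fun b => ?_
        dsimp only
        rw [lint_prod μ n (fun l a => F (a, b l)) fun l => hF.comp (by fun_prop)]
        exact Finset.prod_le_prod' fun l _ => hFg (b l)
    _ = _ := by rw [lint_prod ν n (fun _ => g) fun _ => hg]; simp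

lemma rankOneMeas_eq {m1 m2 : ℕ} (a : Fin m1 → ℂ) (b : Fin m2 → ℂ)
    (M : EuclideanSpace ℂ (Fin m1 × Fin m2)) :
    rankOneMeas a b M =
      ∑ i, (starRingEnd ℂ) (a i) * ∑ j, (starRingEnd ℂ) (b j) * M (i, j) := by
  simp only [rankOneMeas, Finset.mul_sum]
  exact Finset.sum_congr rfl fun i _ => Finset.sum_congr rfl fun j _ => by ring

lemma measurable_rankOneMeas {m1 m2 : ℕ} (M : EuclideanSpace ℂ (Fin m1 × Fin m2)) :
    Measurable fun p : (Fin m1 → ℂ) × (Fin m2 → ℂ) => rankOneMeas p.1 p.2 M := by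
  have hc : Continuous (starRingEnd ℂ) := Complex.continuous_conj
  have : Continuous fun p : (Fin m1 → ℂ) × (Fin m2 → ℂ) => rankOneMeas p.1 p.2 M := by
    unfold rankOneMeas
    refine continuous_finsetSum _ fun i _ => continuous_finsetSum _ fun j _ => ?_
    exact ((hc.comp ((continuous_apply i).comp continuous_fst)).mul continuous_const).mul
      (hc.comp ((continuous_apply j).comp continuous_snd))
  exact this.measurable

lemma measurable_prod_rankOneMeas {m1 m2 : ℕ} (n : ℕ) (α : ℝ)
    (M : EuclideanSpace ℂ (Fin m1 × Fin m2)) :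
    Measurable fun ab : (Fin n → Fin m1 → ℂ) × (Fin n → Fin m2 → ℂ) =>
      ∏ l, ‖rankOneMeas (ab.1 l) (ab.2 l) M‖ₑ ^ (-α) := by
  refine Finset.measurable_prod _ fun l _ => ?_
  have hp : Measurable fun ab : (Fin n → Fin m1 → ℂ) × (Fin n → Fin m2 → ℂ) =>
      (ab.1 l, ab.2 l) := by fun_prop
  have h := (measurable_rankOneMeas M).comp hp
  exact h.enorm.pow_const _

/-- Negative moment of `n` independent measurements of the same matrix, bounded through any one
entry `M (i, j)`. This applies the linear-form bound in `a` (coordinate `i`) and then in `b`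
(coordinate `j`), and multiplies over the `n` pairs. -/
lemma lint_meas {m1 m2 : ℕ} (n : ℕ) (α : ℝ) (μ : Measure ℂ) [IsFiniteMeasure μ] (K : ℝ≥0∞)
    (hK : K ≠ ∞)
    (h : ∀ v u : ℂ, ∫⁻ z, ‖(starRingEnd ℂ) z * v + u‖ₑ ^ (-α) ∂μ ≤ K * ‖v‖ₑ ^ (-α)) :
    ∃ K' : ℝ≥0∞, K' ≠ ∞ ∧ ∀ (M : EuclideanSpace ℂ (Fin m1 × Fin m2)) (i : Fin m1) (j : Fin m2),
      ∫⁻ ab, ∏ l, ‖rankOneMeas (ab.1 l) (ab.2 l) M‖ₑ ^ (-α)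
        ∂((Measure.pi fun _ : Fin n => Measure.pi fun _ : Fin m1 => μ).prod
          (Measure.pi fun _ : Fin n => Measure.pi fun _ : Fin m2 => μ))
        ≤ (K' * ‖M (i, j)‖ₑ ^ (-α)) ^ n := by
  obtain ⟨K1, hK1, h1⟩ := lint_vec α μ K hK h m1
  obtain ⟨K2, hK2, h2⟩ := lint_vec α μ K hK h m2
  refine ⟨K1 * K2, by finiteness, fun M i j => ?_⟩
  have hm : Measurable fun p : (Fin m1 → ℂ) × (Fin m2 → ℂ) => ‖rankOneMeas p.1 p.2 M‖ₑ ^ (-α) :=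
    (measurable_rankOneMeas M).enorm.pow_const _
  have hg := measurable_meas (fun k => M (i, k)) α
  refine (lint_prod_prod_le (Measure.pi fun _ : Fin m1 => μ) (Measure.pi fun _ : Fin m2 => μ) n
    (fun p => ‖rankOneMeas p.1 p.2 M‖ₑ ^ (-α)) hm
    (fun b => K1 * ‖∑ k, (starRingEnd ℂ) (b k) * M (i, k)‖ₑ ^ (-α)) (hg.const_mul _)
    fun b => ?_).trans ?_
  · simp only [rankOneMeas_eq]
    exact h1 (fun i => ∑ k, (starRingEnd ℂ) (b k) * M (i, k)) i
  · rw [lintegral_const_mul _ hg, mul_assoc]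
    gcongr
    exact h2 (fun k => M (i, k)) j

/-- Small-ball estimate: among vectors with coordinates in the disc of radius `R`, those for which
all `n` measurements of `M` are at most `ε` have measure `O((ε / η) ^ (α n))`, for any `α < 2`,
once some entry of `M` has modulus at least `η`. -/
lemma small_ball {m1 m2 : ℕ} (n : ℕ) {α : ℝ} (R : ℝ) (h0 : 0 < α) (hα : α < 2) :
    ∃ K : ℝ≥0∞, K ≠ ∞ ∧ ∀ (M : EuclideanSpace ℂ (Fin m1 × Fin m2)) (i : Fin m1) (j : Fin m2)
      (η ε : ℝ), 0 < η → 0 < ε → η ≤ ‖M (i, j)‖ →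
      volume {ab : (Fin n → Fin m1 → ℂ) × (Fin n → Fin m2 → ℂ) |
        (∀ l i, ‖ab.1 l i‖ ≤ R) ∧ (∀ l j, ‖ab.2 l j‖ ≤ R) ∧
        ∀ l, ‖rankOneMeas (ab.1 l) (ab.2 l) M‖ ≤ ε} ≤
        (K * ENNReal.ofReal ((ε / η) ^ α)) ^ n := by
  obtain ⟨K, hK, h⟩ := lint_disc α R h0 hα
  have : IsFiniteMeasure (volume.restrict (Metric.closedBall (0 : ℂ) R)) :=
    ⟨by rw [Measure.restrict_apply_univ]; exact measure_closedBall_lt_top⟩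
  obtain ⟨K', hK', h'⟩ := lint_meas (m1 := m1) (m2 := m2) n α
    (volume.restrict (Metric.closedBall (0 : ℂ) R)) K hK h
  refine ⟨K', hK', fun M i j η ε hη hε hM => ?_⟩
  have hν : (volume : Measure ((Fin n → Fin m1 → ℂ) × (Fin n → Fin m2 → ℂ))).restrict
      ((Set.univ.pi fun _ => Set.univ.pi fun _ => Metric.closedBall (0 : ℂ) R) ×ˢ
        (Set.univ.pi fun _ => Set.univ.pi fun _ => Metric.closedBall (0 : ℂ) R)) =
      ((Measure.pi fun _ : Fin n => Measure.pi fun _ : Fin m1 =>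
          volume.restrict (Metric.closedBall (0 : ℂ) R)).prod
        (Measure.pi fun _ : Fin n => Measure.pi fun _ : Fin m2 =>
          volume.restrict (Metric.closedBall (0 : ℂ) R))) := by
    simp only [← Measure.restrict_pi_pi, Measure.prod_restrict]
    rfl
  have hint := h' M i j
  rw [← hν] at hint
  rw [← Measure.restrict_eq_self volume (t := (Set.univ.pi fun _ => Set.univ.pi fun _ =>
    Metric.closedBall (0 : ℂ) R) ×ˢ (Set.univ.pi fun _ => Set.univ.pi fun _ =>
    Metric.closedBall (0 : ℂ) R))]
  swap
  · rintro ab ⟨h1, h2, -⟩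
    simpa [Set.mem_pi] using ⟨h1, h2⟩
  set ν := (volume : Measure ((Fin n → Fin m1 → ℂ) × (Fin n → Fin m2 → ℂ))).restrict
      ((Set.univ.pi fun _ => Set.univ.pi fun _ => Metric.closedBall (0 : ℂ) R) ×ˢ
        (Set.univ.pi fun _ => Set.univ.pi fun _ => Metric.closedBall (0 : ℂ) R))
  -- Markov's inequality for the product of the `‖rankOneMeas‖ ^ (-α)`.
  have hmarkov := mul_meas_ge_le_lintegral₀ (μ := ν)
    (f := fun ab => ∏ l, ‖rankOneMeas (ab.1 l) (ab.2 l) M‖ₑ ^ (-α)) (measurable_prod_rankOneMeas n α M).aemeasurable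
    ((ENNReal.ofReal (ε ^ (-α))) ^ n)
  have hanti : ∀ x : ℝ≥0∞, ∀ δ : ℝ, 0 < δ → x ≤ ENNReal.ofReal δ →
      ENNReal.ofReal (δ ^ (-α)) ≤ x ^ (-α) := by
    intro x δ hδ hx
    rw [← ENNReal.ofReal_rpow_of_pos hδ, ENNReal.rpow_neg, ENNReal.rpow_neg]
    gcongr
  have hη' : ‖M (i, j)‖ₑ ^ (-α) ≤ ENNReal.ofReal (η ^ (-α)) := by
    rw [← ENNReal.ofReal_rpow_of_pos hη, ENNReal.rpow_neg, ENNReal.rpow_neg, ← ofReal_norm]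
    gcongr
  have hsub : {ab : (Fin n → Fin m1 → ℂ) × (Fin n → Fin m2 → ℂ) |
        (∀ l i, ‖ab.1 l i‖ ≤ R) ∧ (∀ l j, ‖ab.2 l j‖ ≤ R) ∧
        ∀ l, ‖rankOneMeas (ab.1 l) (ab.2 l) M‖ ≤ ε} ⊆
      {ab | (ENNReal.ofReal (ε ^ (-α))) ^ n ≤
        ∏ l, ‖rankOneMeas (ab.1 l) (ab.2 l) M‖ₑ ^ (-α)} := by
    rintro ab ⟨-, -, h3⟩
    have : ∏ _l : Fin n, ENNReal.ofReal (ε ^ (-α)) ≤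
        ∏ l, ‖rankOneMeas (ab.1 l) (ab.2 l) M‖ₑ ^ (-α) := by
      refine Finset.prod_le_prod' fun l _ => hanti _ _ hε ?_
      rw [← ofReal_norm]
      exact ENNReal.ofReal_le_ofReal (h3 l)
    simpa using this
  have hpos : 0 < ε ^ (-α) := by positivity
  calc _ ≤ _ := measure_mono hsub
    _ ≤ (∫⁻ ab, ∏ l, ‖rankOneMeas (ab.1 l) (ab.2 l) M‖ₑ ^ (-α) ∂ν) /
          (ENNReal.ofReal (ε ^ (-α))) ^ n := by
        rw [ENNReal.le_div_iff_mul_le (Or.inl (pow_ne_zero _ (by simpa using hpos)))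
          (Or.inl (by finiteness)), mul_comm]
        exact hmarkov
    _ ≤ (K' * ENNReal.ofReal (η ^ (-α))) ^ n / (ENNReal.ofReal (ε ^ (-α))) ^ n := by
        gcongr
        exact hint.trans (by gcongr)
    _ = _ := by
        rw [div_eq_mul_inv, ENNReal.inv_pow, ← mul_pow, mul_assoc, ← div_eq_mul_inv, ← ENNReal.ofReal_div_of_pos hpos,
          Real.rpow_neg hη.le, Real.rpow_neg hε.le, Real.div_rpow hε.le hη.le]
        congr 3
        field_simp

/-! ### The union bound -/

/-- The failure set is null once `a`, `b` are confined to polydiscs and a fixed entry of `M` is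
bounded below. With `s < α n` and a cover by at most `ρ ^ (-s)` balls, its measure is
`O(ρ ^ (α n - s))`. -/
lemma null_piece {m1 m2 n : ℕ} (hn : 0 < n) {Ω : Set (EuclideanSpace ℂ (Fin m1 × Fin m2))}
    (hbd : Bornology.IsBounded Ω) (hdim : lowerMinkowskiDim Ω < 2 * n) (R η : ℝ) (hR : 0 < R)
    (hη : 0 < η) (i : Fin m1) (j : Fin m2) :
    volume {ab : (Fin n → Fin m1 → ℂ) × (Fin n → Fin m2 → ℂ) |
        (∀ l i, ‖ab.1 l i‖ ≤ R) ∧ (∀ l j, ‖ab.2 l j‖ ≤ R) ∧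
        ∃ M ∈ Ω, 2 * η ≤ ‖M (i, j)‖ ∧ ∀ l, rankOneMeas (ab.1 l) (ab.2 l) M = 0} = 0 := by
  have hn' : (0 : ℝ) < n := by exact_mod_cast hn
  -- Exponents with `max (lowerMinkowskiDim Ω) 0 < s < α n` and `0 < α < 2`.
  obtain ⟨s, hs, hs2⟩ := exists_between (max_lt hdim (by positivity : (0 : ℝ) < 2 * n))
  have hs0 : 0 < s := (le_max_right _ _).trans_lt hs
  replace hs := (le_max_left _ _).trans_lt hs
  obtain ⟨α, hα, hα2⟩ := exists_between ((div_lt_iff₀ hn').2 hs2)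
  have hα0 : 0 < α := lt_trans (by positivity) hα
  rw [div_lt_iff₀ hn'] at hα
  obtain ⟨K, hK, hball⟩ := small_ball (m1 := m1) (m2 := m2) n R hα0 hα2
  -- `M ↦ a* M (conj b)` is `D`-Lipschitz when the coordinates of `a`, `b` are at most `R`.
  set D : ℝ := m1 * m2 * R ^ 2 + 1
  have hD : 0 < D := by positivity
  set B := {ab : (Fin n → Fin m1 → ℂ) × (Fin n → Fin m2 → ℂ) |
        (∀ l i, ‖ab.1 l i‖ ≤ R) ∧ (∀ l j, ‖ab.2 l j‖ ≤ R) ∧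
        ∃ M ∈ Ω, 2 * η ≤ ‖M (i, j)‖ ∧ ∀ l, rankOneMeas (ab.1 l) (ab.2 l) M = 0} with hB
  have hbound : ∃ᶠ ρ in nhdsWithin (0 : ℝ) (Set.Ioi 0),
      volume B ≤ K ^ n * ENNReal.ofReal ((D / η) ^ (α * n) * ρ ^ (α * n - s)) := by
    refine ((frequently_card_le hbd hs).and_eventually (Ioo_mem_nhdsGT hη)).mono ?_
    rintro ρ ⟨⟨C, hC, hcov⟩, hρ0, hρη⟩
    -- A vanishing measurement of `M` gives a measurement of size at most `D * ρ` of the center of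
    -- a ball containing `M`; since `ρ < η`, that center still has a large entry.
    have hsub : B ⊆ ⋃ c ∈ C.filter (fun c => η ≤ ‖c (i, j)‖),
        {ab : (Fin n → Fin m1 → ℂ) × (Fin n → Fin m2 → ℂ) |
        (∀ l i, ‖ab.1 l i‖ ≤ R) ∧ (∀ l j, ‖ab.2 l j‖ ≤ R) ∧
        ∀ l, ‖rankOneMeas (ab.1 l) (ab.2 l) c‖ ≤ D * ρ} := by
      rintro ab ⟨h1, h2, M, hM, hMη, h3⟩
      obtain ⟨c, hc, hMc⟩ := Set.mem_iUnion₂.1 (hcov hM)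
      rw [Metric.mem_closedBall, dist_comm, dist_eq_norm] at hMc
      have hent : ∀ p, ‖c p - M p‖ ≤ ρ := fun p => (PiLp.norm_apply_le (c - M) p).trans hMc
      refine Set.mem_iUnion₂.2 ⟨c, Finset.mem_filter.2 ⟨hc, ?_⟩, h1, h2, fun l => ?_⟩
      · have := norm_sub_norm_le (M (i, j)) (c (i, j))
        have := hent (i, j)
        rw [norm_sub_rev] at this
        linarith
      · have : rankOneMeas (ab.1 l) (ab.2 l) c = ∑ i, ∑ j,
            (starRingEnd ℂ) (ab.1 l i) * (c (i, j) - M (i, j)) * (starRingEnd ℂ) (ab.2 l j) := by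
          rw [← sub_zero (rankOneMeas (ab.1 l) (ab.2 l) c), ← h3 l]
          simp only [rankOneMeas, ← Finset.sum_sub_distrib]
          exact Finset.sum_congr rfl fun i _ => Finset.sum_congr rfl fun j _ => by ring
        rw [this]
        calc _ ≤ ∑ _i : Fin m1, ∑ _j : Fin m2, R * ρ * R := by
              refine norm_sum_le_of_le _ fun i _ => norm_sum_le_of_le _ fun j _ => ?_
              rw [norm_mul, norm_mul, Complex.norm_conj, Complex.norm_conj]
              gcongr
              · exact h1 l i
              · exact hent _
              · exact h2 l j
          _ ≤ D * ρ := by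
              simp only [Finset.sum_const, Finset.card_univ, Fintype.card_fin, nsmul_eq_mul, D]
              nlinarith
    calc volume B ≤ ∑ c ∈ C.filter (fun c => η ≤ ‖c (i, j)‖),
          (K * ENNReal.ofReal ((D * ρ / η) ^ α)) ^ n := by
          refine (measure_mono hsub).trans ((measure_biUnion_finset_le _ _).trans ?_)
          refine Finset.sum_le_sum fun c hc => ?_
          exact hball c i j η (D * ρ) hη (by positivity) (Finset.mem_filter.1 hc).2
      _ ≤ C.card * (K * ENNReal.ofReal ((D * ρ / η) ^ α)) ^ n := by
          rw [Finset.sum_const, nsmul_eq_mul]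
          gcongr
          exact Finset.filter_subset _ _
      _ ≤ ENNReal.ofReal (ρ ^ (-s)) * (K * ENNReal.ofReal ((D * ρ / η) ^ α)) ^ n := by
          gcongr
          rw [← ENNReal.ofReal_natCast]
          exact ENNReal.ofReal_le_ofReal hC
      _ = _ := by
          rw [mul_pow, mul_left_comm, ← ENNReal.ofReal_pow (by positivity),
            ← ENNReal.ofReal_mul (by positivity)]
          congr 2
          rw [← Real.rpow_mul_natCast (by positivity), mul_div_right_comm,
            Real.mul_rpow (by positivity) (by positivity), sub_eq_add_neg, Real.rpow_add hρ0]
          ring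
  by_contra hne
  have hlim : Tendsto (fun ρ : ℝ => K ^ n * ENNReal.ofReal ((D / η) ^ (α * n) * ρ ^ (α * n - s)))
      (nhdsWithin (0 : ℝ) (Set.Ioi 0)) (nhds 0) := by
    have hcont : Tendsto (fun ρ : ℝ => (D / η) ^ (α * n) * ρ ^ (α * n - s)) (nhds 0) (nhds 0) := by
      have := ((Real.continuous_rpow_const (q := α * n - s) (by linarith)).const_mul
        ((D / η) ^ (α * n))).tendsto 0
      simpa [Real.zero_rpow (by linarith : α * n - s ≠ 0)] using this
    have := ENNReal.Tendsto.const_mul (a := K ^ n)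
      ((ENNReal.tendsto_ofReal hcont).mono_left
        (nhdsWithin_le_nhds (s := Set.Ioi (0 : ℝ)))) (Or.inr (by finiteness))
    simpa using this
  have hev := hlim.eventually_lt_const (pos_iff_ne_zero.2 hne)
  obtain ⟨ρ, h1, h2⟩ := (hbound.and_eventually hev).exists
  exact absurd h2 (not_lt.2 h1)

/-- If `2n` exceeds the lower Minkowski dimension of a nonempty bounded set
`Ω ⊆ ℂ^{m1×m2}` (Frobenius norm), then for Lebesgue-almost all tuples of vectors
`a_j, b_j`, no nonzero `M ∈ Ω` satisfies `a_j* M (conj b_j) = 0` for all `j`. -/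
theorem null_space_property (m1 m2 n : ℕ) (hn : 0 < n)
    (Ω : Set (EuclideanSpace ℂ (Fin m1 × Fin m2))) (hne : Ω.Nonempty)
    (hbd : Bornology.IsBounded Ω)
    (hdim : lowerMinkowskiDim Ω < 2 * n) :
    ∀ᵐ ab : (Fin n → Fin m1 → ℂ) × (Fin n → Fin m2 → ℂ),
      ¬ ∃ M ∈ Ω, M ≠ 0 ∧ ∀ j : Fin n, rankOneMeas (ab.1 j) (ab.2 j) M = 0 := by
  -- The failure set is covered by countably many pieces on which `a`, `b` are bounded by `R + 1`
  -- and one fixed entry of `M` has modulus at least `2 / (L + 1)`.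
  have hnull : volume (⋃ (R : ℕ) (L : ℕ) (i : Fin m1) (j : Fin m2),
      {ab : (Fin n → Fin m1 → ℂ) × (Fin n → Fin m2 → ℂ) |
        (∀ l i, ‖ab.1 l i‖ ≤ (R : ℝ) + 1) ∧ (∀ l j, ‖ab.2 l j‖ ≤ (R : ℝ) + 1) ∧
        ∃ M ∈ Ω, 2 * (1 / ((L : ℝ) + 1)) ≤ ‖M (i, j)‖ ∧
          ∀ l, rankOneMeas (ab.1 l) (ab.2 l) M = 0}) = 0 := by
    simp only [measure_iUnion_null_iff]
    intro R L i j
    exact null_piece hn hbd hdim _ _ (by positivity) (by positivity) i j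
  refine measure_mono_null ?_ hnull
  intro ab hab
  obtain ⟨M, hM, hM0, h⟩ := not_not.1 hab
  obtain ⟨⟨i, j⟩, hij⟩ : ∃ p, M p ≠ 0 := by
    by_contra! hcon
    exact hM0 (PiLp.ext hcon)
  obtain ⟨R, hR⟩ := exists_nat_ge (‖ab.1‖ + ‖ab.2‖)
  obtain ⟨L, hL⟩ := exists_nat_one_div_lt (half_pos (norm_pos_iff.2 hij))
  have hn1 := norm_nonneg ab.1
  have hn2 := norm_nonneg ab.2
  simp only [Set.mem_iUnion]
  refine ⟨R, L, i, j, fun l k => ?_, fun l k => ?_, M, hM, by linarith, h⟩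
  · have := (norm_le_pi_norm (ab.1 l) k).trans (norm_le_pi_norm ab.1 l)
    linarith
  · have := (norm_le_pi_norm (ab.2 l) k).trans (norm_le_pi_norm ab.2 l)
    linarith
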